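/- arXiv:2511.12863 — 5 statements merged into one kernel-verified Lean document; each statement's English description precedes it below -/
import Mathlib

section
/- Let z ∈ D_k and z' ∈ D_ℓ with k ≤ ℓ be ω-mutually dependent data sources, i.e., v(S ∪ {z}) = v(S) and v(S ∪ {z'}) = v(S) for every S ⊆ D \ {z, z'}. Then the Asymmetric Data Shapley value satisfies: if k = ℓ then φ^σ(z; v, D) = φ^σ(z'; v, D), and if k < ℓ then φ^σ(z; v, D) = 0. -/
open Finset

variable {α : Type*}

/-- Prefix union `U_t = D₁ ∪ ⋯ ∪ D_t` (groups are 0-indexed, so this is the union of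
the groups with index `< t`). -/
def prefixUnion [DecidableEq α] (Dg : ℕ → Finset α) (t : ℕ) : Finset α :=
  (Finset.range t).biUnion Dg

/-- Asymmetric Data Shapley value (subset form) of a source `z` belonging to group `Dg t`. -/
noncomputable def ADS [DecidableEq α] (Dg : ℕ → Finset α) (v : Finset α → ℝ) (t : ℕ)
    (z : α) : ℝ :=
  (1 / (Dg t).card) *
    ∑ S ∈ ((Dg t).erase z).powerset,
      ((((Dg t).card - 1).choose S.card : ℝ))⁻¹ *
        (v (prefixUnion Dg t ∪ S ∪ {z}) - v (prefixUnion Dg t ∪ S))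

/-!
The value `φ^σ(z)` of `z ∈ D_t` is the ordinary Shapley value of `z` in the game
`S ↦ v (U_t ∪ S)` on the players `D_t`. In the game of `D_k`, mutual dependence makes `z` and `z'`
interchangeable when both are players, and makes `z` a null player when `z'` arrives later. The
conclusions are then the symmetry and null player axioms of the Shapley value.
-/

section ShapleyValue

variable {M : Type*} [DecidableEq α] [AddCommGroup M] [Module ℚ M]
  {N : Finset α} {w : Finset α → M} {z z' : α}

/-- The Shapley value of the player `z` in the cooperative game `w` on the player set `N`, in subset
form. It is meaningful for `z ∈ N`. The weights are rational, so payoffs may lie in any rational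
vector space. -/
noncomputable def shapleyValue (N : Finset α) (w : Finset α → M) (z : α) : M :=
  (N.card : ℚ)⁻¹ • ∑ S ∈ (N.erase z).powerset,
    ((N.card - 1).choose S.card : ℚ)⁻¹ • (w (insert z S) - w S)

theorem shapleyValue_eq_zero_of_null (hnull : ∀ S ⊆ N.erase z, w (insert z S) = w S) :
    shapleyValue N w z = 0 := by
  rw [shapleyValue, sum_eq_zero, smul_zero]
  intro S hS
  rw [hnull S (mem_powerset.mp hS), sub_self, smul_zero]

theorem shapleyValue_eq_sum_add_sum (hz' : z' ∈ N) (hne : z ≠ z') :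
    shapleyValue N w z = (N.card : ℚ)⁻¹ •
      (∑ S ∈ (N \ {z, z'}).powerset,
          ((N.card - 1).choose S.card : ℚ)⁻¹ • (w (insert z S) - w S) +
        ∑ S ∈ (N \ {z, z'}).powerset,
          ((N.card - 1).choose (S.card + 1) : ℚ)⁻¹ •
            (w (insert z (insert z' S)) - w (insert z' S))) := by
  have hnotMem : z' ∉ N \ {z, z'} := by simp
  have herase : N.erase z = insert z' (N \ {z, z'}) := by grind
  rw [shapleyValue, herase, sum_powerset_insert hnotMem]
  congr 2
  refine sum_congr rfl fun S hS => ?_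
  rw [card_insert_of_notMem fun h => hnotMem (mem_powerset.mp hS h)]

theorem shapleyValue_eq_of_symm (hz : z ∈ N) (hz' : z' ∈ N)
    (hsymm : ∀ S ⊆ N \ {z, z'}, w (insert z S) = w (insert z' S)) :
    shapleyValue N w z = shapleyValue N w z' := by
  rcases eq_or_ne z z' with rfl | hne
  · rfl
  rw [shapleyValue_eq_sum_add_sum hz' hne, shapleyValue_eq_sum_add_sum hz hne.symm,
    pair_comm z' z]
  congr 2 <;> refine sum_congr rfl fun S hS => ?_
  · rw [hsymm S (mem_powerset.mp hS)]
  · rw [insert_comm, hsymm S (mem_powerset.mp hS)]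

end ShapleyValue

section PrefixUnion

variable [DecidableEq α] {Dg : ℕ → Finset α}

theorem prefixUnion_mono : Monotone (prefixUnion Dg) := fun _ _ h =>
  biUnion_subset_biUnion_of_subset_left Dg (range_mono h)

theorem subset_prefixUnion {t T : ℕ} (ht : t < T) : Dg t ⊆ prefixUnion Dg T :=
  subset_biUnion_of_mem Dg (mem_range.mpr ht)

theorem notMem_prefixUnion {T t j : ℕ} (hdisj : (Set.Iio T).PairwiseDisjoint Dg) (hj : j < T)
    (htj : t ≤ j) {x : α} (hx : x ∈ Dg j) : x ∉ prefixUnion Dg t := by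
  have hdisjoint : Disjoint (prefixUnion Dg t) (Dg j) :=
    (disjoint_biUnion_left _ _ _).mpr fun i hi =>
      have hij : i < j := (mem_range.mp hi).trans_le htj
      hdisj (hij.trans hj) hj hij.ne
  exact disjoint_right.mp hdisjoint hx

end PrefixUnion

theorem ADS_eq_shapleyValue [DecidableEq α] (Dg : ℕ → Finset α) (v : Finset α → ℝ) (t : ℕ)
    (z : α) :
    ADS Dg v t z = shapleyValue (Dg t) (fun S => v (prefixUnion Dg t ∪ S)) z := by
  simp [ADS, shapleyValue, Rat.smul_def, union_insert, union_singleton]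

/-- If `z ∈ D_k` and `z' ∈ D_ℓ` with `k ≤ ℓ` are ω-mutually dependent (adding either of them
to any `S ⊆ D \ {z, z'}` leaves the utility unchanged), then the Asymmetric Data Shapley
value satisfies: `φ^σ(z) = φ^σ(z')` if `k = ℓ`, and `φ^σ(z) = 0` if `k < ℓ`. -/
theorem ads_intra_group_mutual_dependence [DecidableEq α]
    (T : ℕ) (hT : 1 ≤ T) (Dg : ℕ → Finset α)
    (hdisj : ∀ i < T, ∀ j < T, i ≠ j → Disjoint (Dg i) (Dg j))
    (hne : ∀ j < T, (Dg j).Nonempty)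
    (D : Finset α) (hD : D = (Finset.range T).biUnion Dg)
    (v : Finset α → ℝ)
    (k l : ℕ) (hk : k < T) (hl : l < T) (hkl : k ≤ l)
    (z z' : α) (hz : z ∈ Dg k) (hz' : z' ∈ Dg l)
    (hdep : ∀ S ⊆ D \ {z, z'}, v (S ∪ {z}) = v S ∧ v (S ∪ {z'}) = v S) :
    (k = l → ADS Dg v k z = ADS Dg v l z') ∧ (k < l → ADS Dg v k z = 0) := by
  have hdisj_Iio : (Set.Iio T).PairwiseDisjoint Dg := fun i hi j hj => hdisj i hi j hj
  have hcoalition : ∀ S ⊆ Dg k \ {z, z'}, prefixUnion Dg k ∪ S ⊆ D \ {z, z'} := by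
    have hzU : z ∉ prefixUnion Dg k := notMem_prefixUnion hdisj_Iio hk le_rfl hz
    have hzU' : z' ∉ prefixUnion Dg k := notMem_prefixUnion hdisj_Iio hl hkl hz'
    have hUD : prefixUnion Dg k ⊆ D := hD ▸ prefixUnion_mono hk.le
    have hDgD : Dg k ⊆ D := hD ▸ subset_prefixUnion hk
    grind
  have hnull : ∀ S ⊆ Dg k \ {z, z'},
      v (prefixUnion Dg k ∪ insert z S) = v (prefixUnion Dg k ∪ S) ∧
        v (prefixUnion Dg k ∪ insert z' S) = v (prefixUnion Dg k ∪ S) := fun S hS => by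
    simpa only [union_insert, union_singleton] using hdep _ (hcoalition S hS)
  constructor
  · rintro rfl
    rw [ADS_eq_shapleyValue, ADS_eq_shapleyValue]
    exact shapleyValue_eq_of_symm hz hz' fun S hS => (hnull S hS).1.trans (hnull S hS).2.symm
  · intro hlt
    have hz'k : z' ∉ Dg k := disjoint_right.mp (hdisj_Iio hk hl hlt.ne) hz'
    rw [ADS_eq_shapleyValue]
    exact shapleyValue_eq_zero_of_null fun S hS => (hnull S (by grind)).1
end

section
/- For every t ∈ {1, …, T} and every z ∈ D_t, the uniform average of one-step marginal contributions over ordered permutations equals the subset form: (1/∏_{j=1}^{T} |D_j|!) · Σ_{π ∈ R^σ(D)} (v(π^{<z} ∪ {z}) − v(π^{<z})) = φ^σ(z; v, D). -/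
open Finset

variable {α : Type*}

/-- A list `π` respects the ordered groups `σ = (D₁, …, D_T)` if it is the concatenation,
in group order, of a duplicate-free enumeration of each group. -/
def Respects [DecidableEq α] (Dg : ℕ → Finset α) (T : ℕ) (π : List α) : Prop :=
  ∃ Ls : Fin T → List α,
    (∀ j : Fin T, (Ls j).Nodup ∧ (Ls j).toFinset = Dg j.1) ∧
    π = (List.ofFn Ls).flatten

/-- `R^σ(D)`: the finite set of duplicate-free lists enumerating `D` that respect the
group order `σ`. -/
noncomputable def Rsigma [DecidableEq α] (Dg : ℕ → Finset α) (T : ℕ) (D : Finset α) :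
    Finset (List α) :=
  @Finset.filter _ (Respects Dg T) (Classical.decPred _) D.toList.permutations.toFinset

/-- `π^{<z}`: the finite set of elements strictly preceding `z` in the list `π`. -/
def predSet [DecidableEq α] (π : List α) (z : α) : Finset α :=
  (π.takeWhile (fun a => a ≠ z)).toFinset

/-! Under a uniformly random ordering respecting `σ`, the enumerations of the groups are independent
and uniform, and for `z ∈ D_t` the set `π^{<z}` is `U_{t-1} ∪ ℓ^{<z}`, where `ℓ` is the enumeration
of `D_t`; so only the average over `ℓ` remains. There the predecessors of `z` form a given
`S ⊆ D_t \ {z}` in `|S|! (|D_t| - 1 - |S|)!` of the `|D_t|!` enumerations, a proportion of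
`(|D_t| * C(|D_t| - 1, |S|))⁻¹`. -/

open scoped BigOperators Nat

section PiFinset

variable {ι : Type*} [Fintype ι] [DecidableEq ι] {κ : ι → Type*}

theorem sum_piFinset_apply_eq_nsmul {M : Type*} [AddCommMonoid M] (s : ∀ i, Finset (κ i)) (i : ι)
    (f : κ i → M) :
    ∑ g ∈ Fintype.piFinset s, f (g i) = (∏ j ∈ univ.erase i, #(s j)) • ∑ b ∈ s i, f b := by
  classical
  have hmaps : ∀ g ∈ Fintype.piFinset s, g i ∈ s i := fun g hg => Fintype.mem_piFinset.1 hg i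
  rw [← sum_fiberwise_of_maps_to' hmaps, smul_sum]
  refine sum_congr rfl fun b hb => ?_
  rw [sum_const, Fintype.card_filter_piFinset_eq_of_mem s i hb]

theorem expect_piFinset_apply {M : Type*} [AddCommMonoid M] [Module ℚ≥0 M]
    {s : ∀ i, Finset (κ i)} (i : ι) (hs : ∀ j ≠ i, (s j).Nonempty) (f : κ i → M) :
    𝔼 g ∈ Fintype.piFinset s, f (g i) = 𝔼 b ∈ s i, f b := by
  have hprod : (∏ j ∈ univ.erase i, (#(s j) : ℚ≥0)) ≠ 0 :=
    prod_ne_zero_iff.2 fun j hj => Nat.cast_ne_zero.2 (hs j (ne_of_mem_erase hj)).card_ne_zero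
  rw [expect, expect, sum_piFinset_apply_eq_nsmul, Fintype.card_piFinset,
    ← mul_prod_erase univ _ (mem_univ i), ← Nat.cast_smul_eq_nsmul ℚ≥0, smul_smul]
  push_cast
  rw [mul_inv, inv_mul_cancel_right₀ hprod]

end PiFinset

theorem flatten_ofFn_inj {n : ℕ} {L M : Fin n → List α} (hlen : ∀ i, (L i).length = (M i).length) :
    (List.ofFn L).flatten = (List.ofFn M).flatten ↔ L = M := by
  refine ⟨fun h => List.ofFn_injective (List.eq_iff_flatten_eq.2 ⟨h, ?_⟩), fun h => h ▸ rfl⟩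
  simp only [List.map_ofFn, Function.comp_def, hlen]

section Enumerations

variable [DecidableEq α] {s : Finset α} {l : List α}

/-- The duplicate-free lists enumerating `s`, i.e. the linear orderings of `s`; an ordered
permutation of `D` concatenates one of these for each group. Defined through `Finset.toList` to
agree definitionally with the set filtered in `Rsigma`. -/
noncomputable def enumerations (s : Finset α) : Finset (List α) :=
  s.toList.permutations.toFinset

theorem mem_enumerations : l ∈ enumerations s ↔ l.Nodup ∧ l.toFinset = s := by
  rw [enumerations, List.mem_toFinset, List.mem_permutations]
  constructor
  · intro h
    exact ⟨h.nodup_iff.2 s.nodup_toList, by rw [List.toFinset_eq_of_perm _ _ h, toList_toFinset]⟩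
  · rintro ⟨hl, rfl⟩
    exact List.perm_of_nodup_nodup_toFinset_eq hl (nodup_toList _) (toList_toFinset _).symm

theorem card_enumerations (s : Finset α) : #(enumerations s) = (#s)! := by
  rw [enumerations, List.toFinset_card_of_nodup (List.nodup_permutations _ s.nodup_toList),
    List.length_permutations, length_toList]

theorem enumerations_nonempty (s : Finset α) : (enumerations s).Nonempty :=
  ⟨s.toList, mem_enumerations.2 ⟨s.nodup_toList, s.toList_toFinset⟩⟩

theorem length_of_mem_enumerations (hl : l ∈ enumerations s) : l.length = #s := by
  obtain ⟨hnodup, rfl⟩ := mem_enumerations.1 hl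
  exact (List.toFinset_card_of_nodup hnodup).symm

theorem append_cons_mem_enumerations {a b : List α} {z : α} :
    a ++ z :: b ∈ enumerations s ↔
      a.Nodup ∧ z ∈ s ∧ a.toFinset ⊆ s.erase z ∧ b ∈ enumerations (s.erase z \ a.toFinset) := by
  simp only [mem_enumerations, List.nodup_append', List.nodup_cons,
    List.Disjoint, Finset.ext_iff, subset_iff, List.mem_toFinset, List.mem_append, List.mem_cons,
    mem_sdiff, mem_erase]
  grind

theorem flatten_ofFn_mem_enumerations {n : ℕ} {D : Fin n → Finset α} {L : Fin n → List α}
    (hD : Pairwise fun i j => Disjoint (D i) (D j)) (hL : ∀ i, L i ∈ enumerations (D i)) :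
    (List.ofFn L).flatten ∈ enumerations (univ.biUnion D) := by
  simp only [mem_enumerations] at hL ⊢
  have hmem : ∀ i x, x ∈ L i ↔ x ∈ D i := fun i x => by rw [← (hL i).2, List.mem_toFinset]
  constructor
  · rw [List.nodup_flatten, List.forall_mem_ofFn_iff, List.pairwise_ofFn]
    refine ⟨fun i => (hL i).1, fun i j hij x hi hj => ?_⟩
    exact disjoint_left.1 (hD hij.ne) ((hmem i x).1 hi) ((hmem j x).1 hj)
  · ext x
    simp [List.mem_ofFn, hmem]

theorem injOn_flatten_ofFn {n : ℕ} (D : Fin n → Finset α) :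
    Set.InjOn (fun L : Fin n → List α => (List.ofFn L).flatten)
      (Fintype.piFinset fun i => enumerations (D i)) := by
  intro L hL M hM h
  rw [mem_coe, Fintype.mem_piFinset] at hL hM
  refine (flatten_ofFn_inj fun i => ?_).1 h
  rw [length_of_mem_enumerations (hL i), length_of_mem_enumerations (hM i)]

end Enumerations

section PredSet

variable [DecidableEq α] {s : Finset α} {z : α}

theorem predSet_append_of_notMem {a : List α} (ha : z ∉ a) (b : List α) :
    predSet (a ++ b) z = a.toFinset ∪ predSet b z := by
  rw [predSet, List.takeWhile_append_of_pos, List.toFinset_append, predSet]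
  intro x hx
  simpa using ne_of_mem_of_not_mem hx ha

theorem predSet_append_cons {a : List α} (ha : z ∉ a) (b : List α) :
    predSet (a ++ z :: b) z = a.toFinset := by
  rw [predSet_append_of_notMem ha]
  simp [predSet]

theorem predSet_append_of_mem {l : List α} (hl : z ∈ l) (b : List α) :
    predSet (l ++ b) z = predSet l z := by
  obtain ⟨p, q, rfl, hp⟩ := List.eq_append_cons_of_mem hl
  rw [List.append_assoc, List.cons_append, predSet_append_cons hp, predSet_append_cons hp]

theorem predSet_flatten_ofFn {n : ℕ} {L : Fin n → List α} {t : Fin n}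
    (hlt : ∀ i < t, z ∉ L i) (ht : z ∈ L t) :
    predSet (List.ofFn L).flatten z =
      (Iio t).biUnion (fun i => (L i).toFinset) ∪ predSet (L t) z := by
  induction n with
  | zero => exact t.elim0
  | succ n ih =>
    rw [List.ofFn_succ, List.flatten_cons]
    cases t using Fin.cases with
    | zero =>
      rw [predSet_append_of_mem ht]
      simp
    | succ t =>
      rw [predSet_append_of_notMem (hlt 0 t.succ_pos),
        ih (fun i hi => hlt i.succ (Fin.succ_lt_succ_iff.2 hi)) ht, ← union_assoc]
      congr 1
      ext x
      simp [Fin.exists_fin_succ]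

theorem predSet_subset_erase {l : List α} (hl : l ∈ enumerations s) :
    predSet l z ⊆ s.erase z := by
  intro x hx
  rw [predSet, List.mem_toFinset] at hx
  rw [mem_erase, ← (mem_enumerations.1 hl).2, List.mem_toFinset]
  exact ⟨by simpa using List.mem_takeWhile_imp hx, (List.takeWhile_prefix _).subset hx⟩

theorem filter_predSet_eq_image {S : Finset α} (hz : z ∈ s) (hS : S ⊆ s.erase z) :
    {l ∈ enumerations s | predSet l z = S} =
      (enumerations S ×ˢ enumerations (s.erase z \ S)).image fun p => p.1 ++ z :: p.2 := by
  ext l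
  simp only [mem_filter, mem_image, mem_product, Prod.exists]
  constructor
  · rintro ⟨hl, rfl⟩
    obtain ⟨a, b, rfl, ha⟩ := List.eq_append_cons_of_mem (a := z) (xs := l)
      (by rwa [← List.mem_toFinset, (mem_enumerations.1 hl).2])
    obtain ⟨hnodup, -, -, hb⟩ := append_cons_mem_enumerations.1 hl
    rw [predSet_append_cons ha]
    exact ⟨a, b, ⟨mem_enumerations.2 ⟨hnodup, rfl⟩, hb⟩, rfl⟩
  · rintro ⟨a, b, ⟨ha, hb⟩, rfl⟩
    obtain ⟨hnodup, rfl⟩ := mem_enumerations.1 ha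
    have hza : z ∉ a := fun h => notMem_erase z s (hS (List.mem_toFinset.2 h))
    exact ⟨append_cons_mem_enumerations.2 ⟨hnodup, hz, hS, hb⟩, predSet_append_cons hza b⟩

theorem card_filter_predSet_eq {S : Finset α} (hz : z ∈ s) (hS : S ⊆ s.erase z) :
    #{l ∈ enumerations s | predSet l z = S} = (#S)! * (#s - 1 - #S)! := by
  rw [filter_predSet_eq_image hz hS, card_image_of_injOn, card_product, card_enumerations,
    card_enumerations, card_sdiff_of_subset hS, card_erase_of_mem hz]
  rintro ⟨a, b⟩ hab ⟨c, d⟩ hcd h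
  rw [mem_coe, mem_product] at hab hcd
  have hlen : a.length = c.length :=
    (length_of_mem_enumerations hab.1).trans (length_of_mem_enumerations hcd.1).symm
  obtain ⟨hac, hbd⟩ := List.append_inj h hlen
  exact Prod.ext hac (List.tail_eq_of_cons_eq hbd)

theorem sum_enumerations_predSet {M : Type*} [AddCommMonoid M] (hz : z ∈ s) (f : Finset α → M) :
    ∑ l ∈ enumerations s, f (predSet l z) =
      ∑ S ∈ (s.erase z).powerset, ((#S)! * (#s - 1 - #S)!) • f S := by
  rw [← sum_fiberwise_of_maps_to' (t := (s.erase z).powerset)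
    (fun l hl => mem_powerset.2 (predSet_subset_erase hl))]
  refine sum_congr rfl fun S hS => ?_
  rw [sum_const, card_filter_predSet_eq hz (mem_powerset.1 hS)]

theorem expect_enumerations_predSet {K : Type*} [Semifield K] [CharZero K] (hz : z ∈ s)
    (f : Finset α → K) :
    𝔼 l ∈ enumerations s, f (predSet l z) =
      1 / #s * ∑ S ∈ (s.erase z).powerset, ((#s - 1).choose #S : K)⁻¹ * f S := by
  rw [expect_eq_sum_div_card, sum_enumerations_predSet hz, card_enumerations, sum_div, mul_sum]
  refine sum_congr rfl fun S hS => ?_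
  have hSs : #S ≤ #s - 1 := by
    rw [← card_erase_of_mem hz]
    exact card_le_card (mem_powerset.1 hS)
  have hs : (#s : K) ≠ 0 := Nat.cast_ne_zero.2 (card_ne_zero_of_mem hz)
  have hfact (n : ℕ) : (n ! : K) ≠ 0 := Nat.cast_ne_zero.2 n.factorial_ne_zero
  have hchoose : ((#s - 1).choose #S : K) ≠ 0 := Nat.cast_ne_zero.2 (Nat.choose_pos hSs).ne'
  rw [← Nat.mul_factorial_pred (card_ne_zero_of_mem hz),
    ← Nat.choose_mul_factorial_mul_factorial hSs, nsmul_eq_mul]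
  push_cast
  field_simp [hfact]

end PredSet

section Rsigma

variable [DecidableEq α] {T : ℕ} {Dg : ℕ → Finset α}

theorem biUnion_Iio_eq_prefixUnion (t : Fin T) :
    ((Iio t).biUnion fun i => Dg i) = prefixUnion Dg t := by
  ext x
  simp only [prefixUnion, mem_biUnion, mem_Iio, mem_range]
  exact ⟨fun ⟨i, hi, hx⟩ => ⟨i, hi, hx⟩, fun ⟨i, hi, hx⟩ => ⟨⟨i, hi.trans t.2⟩, hi, hx⟩⟩

theorem Rsigma_eq_image (hdisj : Pairwise fun i j : Fin T => Disjoint (Dg i) (Dg j)) :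
    Rsigma Dg T ((range T).biUnion Dg) =
      (Fintype.piFinset fun j : Fin T => enumerations (Dg j)).image
        fun L => (List.ofFn L).flatten := by
  have hunion : (univ.biUnion fun j : Fin T => Dg j) = (range T).biUnion Dg := by
    ext x
    simp [Fin.exists_iff]
  ext π
  rw [Rsigma, @mem_filter _ _ (Classical.decPred _), ← enumerations, mem_image]
  simp only [Fintype.mem_piFinset]
  constructor
  · rintro ⟨-, L, hL, rfl⟩
    exact ⟨L, fun j => mem_enumerations.2 (hL j), rfl⟩
  · rintro ⟨L, hL, rfl⟩
    exact ⟨hunion ▸ flatten_ofFn_mem_enumerations hdisj hL,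
      L, fun j => mem_enumerations.1 (hL j), rfl⟩

theorem card_Rsigma (hdisj : Pairwise fun i j : Fin T => Disjoint (Dg i) (Dg j)) :
    #(Rsigma Dg T ((range T).biUnion Dg)) = ∏ j ∈ range T, (#(Dg j))! := by
  rw [Rsigma_eq_image hdisj, card_image_of_injOn (injOn_flatten_ofFn fun j : Fin T => Dg j),
    Fintype.card_piFinset, ← Fin.prod_univ_eq_prod_range (fun j => (#(Dg j))!)]
  simp only [card_enumerations]

theorem expect_Rsigma_predSet {M : Type*} [AddCommMonoid M] [Module ℚ≥0 M]
    (hdisj : Pairwise fun i j : Fin T => Disjoint (Dg i) (Dg j)) {t : Fin T} {z : α}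
    (hz : z ∈ Dg t) (f : Finset α → M) :
    𝔼 π ∈ Rsigma Dg T ((range T).biUnion Dg), f (predSet π z) =
      𝔼 l ∈ enumerations (Dg t), f (prefixUnion Dg t ∪ predSet l z) := by
  rw [Rsigma_eq_image hdisj, expect_image (injOn_flatten_ofFn fun j : Fin T => Dg j),
    ← expect_piFinset_apply (s := fun j : Fin T => enumerations (Dg j)) t
      fun j _ => enumerations_nonempty (Dg j)]
  refine expect_congr rfl fun L hL => ?_
  have htoFinset (j : Fin T) : (L j).toFinset = Dg j :=
    (mem_enumerations.1 (Fintype.mem_piFinset.1 hL j)).2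
  have hmem (j : Fin T) : z ∈ L j ↔ z ∈ Dg j := by rw [← htoFinset, List.mem_toFinset]
  have hlt : ∀ i < t, z ∉ L i := fun i hi hzi =>
    disjoint_left.1 (hdisj hi.ne) ((hmem i).1 hzi) hz
  simp only [predSet_flatten_ofFn hlt ((hmem t).2 hz), htoFinset, biUnion_Iio_eq_prefixUnion]

end Rsigma

/-- The uniform average of one-step marginal contributions over ordered permutations
respecting `σ` equals the subset form of the Asymmetric Data Shapley value. -/
theorem ads_permutation_eq_subset_form [DecidableEq α]
    (T : ℕ) (hT : 1 ≤ T) (Dg : ℕ → Finset α)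
    (hdisj : ∀ i < T, ∀ j < T, i ≠ j → Disjoint (Dg i) (Dg j))
    (hne : ∀ j < T, (Dg j).Nonempty)
    (D : Finset α) (hD : D = (Finset.range T).biUnion Dg)
    (v : Finset α → ℝ)
    (t : ℕ) (ht : t < T) (z : α) (hz : z ∈ Dg t) :
    (1 / ∏ j ∈ Finset.range T, (((Dg j).card).factorial : ℝ)) *
        ∑ π ∈ Rsigma Dg T D, (v (predSet π z ∪ {z}) - v (predSet π z)) =
      ADS Dg v t z := by
  subst hD
  have hpair : Pairwise fun i j : Fin T => Disjoint (Dg i) (Dg j) := fun i j hij =>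
    hdisj i i.2 j j.2 (Fin.val_ne_of_ne hij)
  let marginal (S : Finset α) : ℝ := v (S ∪ {z}) - v S
  calc
    _ = 𝔼 π ∈ Rsigma Dg T ((range T).biUnion Dg), marginal (predSet π z) := by
      rw [expect_eq_sum_div_card, card_Rsigma hpair, Nat.cast_prod, one_div_mul_eq_div]
    _ = 𝔼 l ∈ enumerations (Dg t), marginal (prefixUnion Dg t ∪ predSet l z) :=
      expect_Rsigma_predSet hpair (t := ⟨t, ht⟩) hz marginal
    _ = ADS Dg v t z :=
      expect_enumerations_predSet hz fun S => marginal (prefixUnion Dg t ∪ S)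
end

section
/- (Symmetric valuation under redundant duplication) Suppose D is the disjoint union of finite sets D₁ and D₂ and f : D₁ → D₂ is a bijection such that for every z ∈ D₁ and every S ⊆ D \ {z, f(z)} one has v(S ∪ {z}) = v(S ∪ {f(z)}), and suppose moreover v(D) = v(D₁). Then φ(z; v, D) = φ(f(z); v, D) for every z ∈ D₁, and Σ_{z ∈ D₁} φ(z; v, D) = Σ_{z ∈ D₂} φ(z; v, D) = (1/2) · Σ_{z ∈ D} φ(z; v, D) = (1/2) · (v(D₁) − v(∅)). -/
open Finset

variable {α : Type*}

/-- Data Shapley value (subset form) of a source `z` in the training set `D`. -/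
noncomputable def DS [DecidableEq α] (D : Finset α) (v : Finset α → ℝ) (z : α) : ℝ :=
  (1 / D.card) *
    ∑ S ∈ (D.erase z).powerset,
      (((D.card - 1).choose S.card : ℝ))⁻¹ * (v (S ∪ {z}) - v S)

/-!
The total Data Shapley value telescopes: let `A k` be the average of `v` over the `k`-element
subsets of `D`. A uniformly random `k`-subset of `D \ {z}`, for `z` uniformly random in `D`, is a
uniformly random `k`-subset of `D`, and becomes a uniformly random `(k + 1)`-subset once `z` is
added. Hence the weighted marginal contributions to `k`-subsets add up to `A (k + 1) - A k`, and all
of them together to `A #D - A 0 = v D - v ∅`. Exchanging a source with its duplicate matches up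
their marginal contributions, so each half of `D` carries half of this total.
-/

open scoped BigOperators

theorem mul_choose_pred_eq_sub_mul_choose (n k : ℕ) :
    n * (n - 1).choose k = (n - k) * n.choose k := by
  cases n with
  | zero => simp
  | succ m => rw [Nat.add_sub_cancel, mul_comm, Nat.choose_mul_succ_eq, mul_comm]

theorem mul_choose_pred_eq_succ_mul_choose_succ (n k : ℕ) :
    n * (n - 1).choose k = (k + 1) * n.choose (k + 1) := by
  cases n with
  | zero => simp
  | succ m => rw [Nat.add_sub_cancel, Nat.add_one_mul_choose_eq, mul_comm]

section DoubleCounting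

variable [DecidableEq α] {M : Type*} [AddCommMonoid M]

theorem sum_sum_powersetCard_erase (D : Finset α) (k : ℕ) (g : Finset α → M) :
    ∑ z ∈ D, ∑ S ∈ (D.erase z).powersetCard k, g S =
      (#D - k) • ∑ S ∈ D.powersetCard k, g S :=
  calc ∑ z ∈ D, ∑ S ∈ (D.erase z).powersetCard k, g S
      = ∑ S ∈ D.powersetCard k, ∑ _z ∈ D \ S, g S :=
        sum_comm' fun z S => by grind
    _ = ∑ S ∈ D.powersetCard k, (#D - k) • g S :=
        sum_congr rfl fun S hS => by
          obtain ⟨hSD, hcard⟩ := mem_powersetCard.mp hS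
          rw [sum_const, card_sdiff_of_subset hSD, hcard]
    _ = (#D - k) • ∑ S ∈ D.powersetCard k, g S := smul_sum.symm

theorem sum_sum_powersetCard_erase_insert (D : Finset α) (k : ℕ) (g : Finset α → M) :
    ∑ z ∈ D, ∑ S ∈ (D.erase z).powersetCard k, g (insert z S) =
      (k + 1) • ∑ T ∈ D.powersetCard (k + 1), g T :=
  calc ∑ z ∈ D, ∑ S ∈ (D.erase z).powersetCard k, g (insert z S)
      = ∑ z ∈ D, ∑ T ∈ D.powersetCard (k + 1) with z ∈ T, g T :=
        sum_congr rfl fun z hz => by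
          refine sum_nbij' (insert z) (fun T => T.erase z) ?_ ?_ ?_ ?_ fun _ _ => rfl <;>
            simp only [mem_filter, mem_powersetCard] <;> grind
    _ = ∑ T ∈ D.powersetCard (k + 1), ∑ _z ∈ T, g T :=
        sum_comm' fun z T => by grind
    _ = ∑ T ∈ D.powersetCard (k + 1), (k + 1) • g T :=
        sum_congr rfl fun T hT => by rw [sum_const, (mem_powersetCard.mp hT).2]
    _ = (k + 1) • ∑ T ∈ D.powersetCard (k + 1), g T := smul_sum.symm

variable [Module ℚ≥0 M]

theorem expect_expect_powersetCard_erase_eq_smul_sum (D : Finset α) (k : ℕ)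
    (G : α → Finset α → M) :
    𝔼 z ∈ D, 𝔼 S ∈ (D.erase z).powersetCard k, G z S =
      ((#D * (#D - 1).choose k : ℕ) : ℚ≥0)⁻¹ •
        ∑ z ∈ D, ∑ S ∈ (D.erase z).powersetCard k, G z S := by
  have inner : ∀ z ∈ D, 𝔼 S ∈ (D.erase z).powersetCard k, G z S =
      ((#D - 1).choose k : ℚ≥0)⁻¹ • ∑ S ∈ (D.erase z).powersetCard k, G z S := fun z hz => by
    rw [expect, card_powersetCard, card_erase_of_mem hz]
  rw [expect_congr rfl inner, expect, ← smul_sum, smul_smul, Nat.cast_mul, mul_inv]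

theorem expect_expect_powersetCard_erase {D : Finset α} {k : ℕ} (hk : k < #D)
    (g : Finset α → M) :
    𝔼 z ∈ D, 𝔼 S ∈ (D.erase z).powersetCard k, g S = 𝔼 S ∈ D.powersetCard k, g S := by
  have hne : ((#D - k : ℕ) : ℚ≥0) ≠ 0 := Nat.cast_ne_zero.mpr (Nat.sub_ne_zero_of_lt hk)
  rw [expect_expect_powersetCard_erase_eq_smul_sum, sum_sum_powersetCard_erase,
    mul_choose_pred_eq_sub_mul_choose, ← Nat.cast_smul_eq_nsmul ℚ≥0, smul_smul, Nat.cast_mul,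
    mul_inv_rev, inv_mul_cancel_right₀ hne, expect, card_powersetCard]

theorem expect_expect_powersetCard_erase_insert (D : Finset α) (k : ℕ) (g : Finset α → M) :
    𝔼 z ∈ D, 𝔼 S ∈ (D.erase z).powersetCard k, g (insert z S) =
      𝔼 T ∈ D.powersetCard (k + 1), g T := by
  have hne : ((k + 1 : ℕ) : ℚ≥0) ≠ 0 := Nat.cast_ne_zero.mpr k.succ_ne_zero
  rw [expect_expect_powersetCard_erase_eq_smul_sum D k fun z S => g (insert z S),
    sum_sum_powersetCard_erase_insert, mul_choose_pred_eq_succ_mul_choose_succ,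
    ← Nat.cast_smul_eq_nsmul ℚ≥0, smul_smul, Nat.cast_mul, mul_inv_rev,
    inv_mul_cancel_right₀ hne, expect, card_powersetCard]

end DoubleCounting

section DataShapley

variable [DecidableEq α]

theorem DS_eq_sum_expect {D : Finset α} {z : α} (hz : z ∈ D) (v : Finset α → ℝ) :
    DS D v z = (1 / #D) *
      ∑ k ∈ range #D, 𝔼 S ∈ (D.erase z).powersetCard k, (v (insert z S) - v S) := by
  rw [DS, sum_powerset, card_erase_add_one hz]
  congr 1
  refine sum_congr rfl fun k _ => ?_
  rw [expect_eq_sum_div_card, card_powersetCard, card_erase_of_mem hz, div_eq_inv_mul, mul_sum]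
  refine sum_congr rfl fun S hS => ?_
  rw [(mem_powersetCard.mp hS).2, union_singleton]

theorem sum_DS (D : Finset α) (v : Finset α → ℝ) : ∑ z ∈ D, DS D v z = v D - v ∅ :=
  calc ∑ z ∈ D, DS D v z
      = ∑ k ∈ range #D,
          𝔼 z ∈ D, 𝔼 S ∈ (D.erase z).powersetCard k, (v (insert z S) - v S) := by
        rw [sum_congr rfl fun z hz => DS_eq_sum_expect hz v, ← mul_sum, sum_comm, mul_sum]
        exact sum_congr rfl fun k _ => by rw [expect_eq_sum_div_card, one_div_mul_eq_div]
    _ = ∑ k ∈ range #D,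
          (𝔼 T ∈ D.powersetCard (k + 1), v T - 𝔼 S ∈ D.powersetCard k, v S) :=
        sum_congr rfl fun k hk => by
          simp only [expect_sub_distrib]
          rw [expect_expect_powersetCard_erase_insert,
            expect_expect_powersetCard_erase (mem_range.mp hk)]
    _ = 𝔼 T ∈ D.powersetCard #D, v T - 𝔼 S ∈ D.powersetCard 0, v S :=
        sum_range_sub (fun k => 𝔼 T ∈ D.powersetCard k, v T) #D
    _ = v D - v ∅ := by
        rw [powersetCard_self, powersetCard_zero, expect_singleton, expect_singleton]

theorem DS_eq_of_interchangeable {D : Finset α} {v : Finset α → ℝ} {a b : α}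
    (ha : a ∈ D) (hb : b ∈ D) (h : ∀ S ⊆ D \ {a, b}, v (S ∪ {a}) = v (S ∪ {b})) :
    DS D v a = DS D v b := by
  obtain rfl | hab := eq_or_ne a b
  · rfl
  have erase_a : D.erase a = insert b (D \ {a, b}) := by grind
  have erase_b : D.erase b = insert a (D \ {a, b}) := by grind
  rw [DS, DS, erase_a, erase_b, sum_powerset_insert (by simp), sum_powerset_insert (by simp)]
  congr 2 <;> refine sum_congr rfl fun S hS => ?_ <;> rw [mem_powerset] at hS
  · rw [h S hS]
  · have haS : a ∉ S := fun hx => by simpa using hS hx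
    have hbS : b ∉ S := fun hx => by simpa using hS hx
    have union_pair : insert b S ∪ {a} = insert a S ∪ {b} := by grind
    have value_eq : v (insert b S) = v (insert a S) := by
      simpa only [union_singleton] using (h S hS).symm
    rw [card_insert_of_notMem haS, card_insert_of_notMem hbS, union_pair, value_eq]

end DataShapley

/-- Symmetric valuation under redundant duplication: if `D` is the disjoint union of
`D₁` and `D₂`, `f : D₁ → D₂` is a bijection with `v(S ∪ {z}) = v(S ∪ {f z})` for every
`z ∈ D₁` and `S ⊆ D \ {z, f z}`, and `v(D) = v(D₁)`, then each original source has the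
same Data Shapley value as its duplicate, and each half carries exactly half of the total
value `v(D₁) − v(∅)`. -/
theorem ds_redundant_duplication [DecidableEq α]
    (D D₁ D₂ : Finset α) (hD : D = D₁ ∪ D₂) (hdisj : Disjoint D₁ D₂)
    (n : ℕ) (hn : n = D.card) (hn1 : 1 ≤ n)
    (v : Finset α → ℝ)
    (f : α → α) (hbij : Set.BijOn f ↑D₁ ↑D₂)
    (hdup : ∀ z ∈ D₁, ∀ S ⊆ D \ {z, f z}, v (S ∪ {z}) = v (S ∪ {f z}))
    (hvD : v D = v D₁) :
    (∀ z ∈ D₁, DS D v z = DS D v (f z)) ∧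
      ∑ z ∈ D₁, DS D v z = ∑ z ∈ D₂, DS D v z ∧
      ∑ z ∈ D₁, DS D v z = (1 / 2) * ∑ z ∈ D, DS D v z ∧
      ∑ z ∈ D₁, DS D v z = (1 / 2) * (v D₁ - v ∅) := by
  have hmaps : ∀ z ∈ D₁, f z ∈ D₂ := fun z hz => hbij.mapsTo hz
  have hsymm : ∀ z ∈ D₁, DS D v z = DS D v (f z) := fun z hz =>
    DS_eq_of_interchangeable (hD ▸ mem_union_left _ hz) (hD ▸ mem_union_right _ (hmaps z hz))
      (hdup z hz)
  have hhalves : ∑ z ∈ D₁, DS D v z = ∑ z ∈ D₂, DS D v z :=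
    sum_nbij f hmaps hbij.injOn hbij.surjOn hsymm
  have hsplit : ∑ z ∈ D, DS D v z = ∑ z ∈ D₁, DS D v z + ∑ z ∈ D₂, DS D v z := by
    rw [← sum_union hdisj, ← hD]
  have htotal : ∑ z ∈ D, DS D v z = v D₁ - v ∅ := hvD ▸ sum_DS D v
  refine ⟨hsymm, hhalves, ?_, ?_⟩ <;> linarith
end

section
/- (Hypergeometric averaging identity) For natural numbers A, M and any natural number s with 0 ≤ s ≤ A, the following identity of real numbers holds: (1/(A+M+1)) · Σ_{r=0}^{M} C(A, s) · C(M, r) · (C(A+M, s+r))⁻¹ = 1/(A+1), where C(·,·) denotes the binomial coefficient. -/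
open Finset

/-!
Dividing the summand by `A + M + 1` turns `(C(A+M, s+r))⁻¹` into an entry of Leibniz's harmonic
triangle, in which every entry is the sum of the two entries below it. Expanding the entry at
position `s` of row `A` in this way `M` times expresses it as the sum of entries of row `A + M` with
weights `C(M, r)`; the factor `C(A, s)` then cancels all of that entry except `1 / (A + 1)`.
-/

lemma sum_antidiagonal_choose_nsmul_of_eq_add {E : Type*} [AddCommMonoid E] (f : ℕ → ℕ → E)
    (hf : ∀ a b, f a b = f (a + 1) b + f a (b + 1)) (n a b : ℕ) :
    ∑ ij ∈ antidiagonal n, n.choose ij.1 • f (a + ij.1) (b + ij.2) = f a b := by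
  induction n with
  | zero => simp
  | succ n ih =>
    rw [sum_antidiagonal_choose_succ_nsmul (fun i j => f (a + i) (b + j)), ← sum_add_distrib, ← ih]
    refine sum_congr rfl fun ij hij => ?_
    have hsymm : n.choose ij.2 = n.choose ij.1 :=
      (Nat.choose_symm_of_eq_add (mem_antidiagonal.mp hij).symm).symm
    rw [hsymm, ← nsmul_add, hf (a + ij.1) (b + ij.2), add_comm (f _ _), add_assoc, add_assoc]

section LeibnizHarmonic

variable {K : Type*} [Semifield K]

variable (K) in
/-- The entry at position `a` of row `a + b` of Leibniz's harmonic triangle; over `ℝ` it is the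
Beta integral `∫₀¹ xᵃ (1 - x)ᵇ dx = a! b! / (a + b + 1)!`. Indexing by the distances `a` and `b` to
the two sides of the triangle, rather than by row and position, avoids truncated subtraction. -/
def leibnizHarmonic (a b : ℕ) : K :=
  ((a + b + 1) * (a + b).choose a)⁻¹

lemma leibnizHarmonic_comm (a b : ℕ) : leibnizHarmonic K a b = leibnizHarmonic K b a := by
  rw [leibnizHarmonic, leibnizHarmonic, Nat.choose_symm_add, add_comm a b, add_comm (a : K) b]

lemma leibnizHarmonic_sub_eq_mul_inv_choose {n k : ℕ} (hk : k ≤ n) :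
    leibnizHarmonic K k (n - k) = 1 / (n + 1) * (n.choose k : K)⁻¹ := by
  rw [leibnizHarmonic, ← Nat.cast_add, Nat.add_sub_cancel' hk, mul_inv, one_div]

variable [CharZero K]

lemma leibnizHarmonic_succ_left (a b : ℕ) :
    leibnizHarmonic K (a + 1) b = (a + 1) / (a + b + 2) * leibnizHarmonic K a b := by
  have hchoose : ((a + b + 1 : ℕ) : K) * (a + b).choose a =
      (a + b + 1).choose (a + 1) * (a + 1 : ℕ) :=
    mod_cast Nat.add_one_mul_choose_eq (a + b) a
  have ha : ((a + 1 : ℕ) : K) ≠ 0 := Nat.cast_ne_zero.mpr a.succ_ne_zero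
  push_cast at hchoose ha
  rw [leibnizHarmonic, leibnizHarmonic, hchoose, add_right_comm a 1 b]
  push_cast
  rw [mul_inv, mul_inv, show (a + 1 + b + 1 : K) = a + b + 2 by ring]
  field_simp

lemma leibnizHarmonic_eq_add (a b : ℕ) :
    leibnizHarmonic K a b = leibnizHarmonic K (a + 1) b + leibnizHarmonic K a (b + 1) := by
  have hrow : (a + b + 2 : K) ≠ 0 := mod_cast (a + b + 1).succ_ne_zero
  rw [leibnizHarmonic_comm a (b + 1), leibnizHarmonic_succ_left, leibnizHarmonic_succ_left,
    leibnizHarmonic_comm b a, add_comm (b : K) a, ← add_mul, ← add_div,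
    show (a + 1 + (b + 1) : K) = a + b + 2 by ring, div_self hrow, one_mul]

lemma sum_range_choose_mul_leibnizHarmonic (n a b : ℕ) :
    ∑ r ∈ range (n + 1), (n.choose r : K) * leibnizHarmonic K (a + r) (b + (n - r)) =
      leibnizHarmonic K a b := by
  simp_rw [← nsmul_eq_mul]
  rw [← sum_antidiagonal_choose_nsmul_of_eq_add _ leibnizHarmonic_eq_add n a b,
    Nat.sum_antidiagonal_eq_sum_range_succ_mk]

end LeibnizHarmonic

theorem hypergeometric_averaging_identity_general {K : Type*} [Semifield K] [CharZero K]
    (A M s : ℕ) (hs : s ≤ A) :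
    (1 / (A + M + 1 : K)) *
        ∑ r ∈ range (M + 1),
          (A.choose s : K) * (M.choose r : K) * (((A + M).choose (s + r) : K))⁻¹ =
      1 / (A + 1 : K) := by
  have hchoose : (A.choose s : K) ≠ 0 := Nat.cast_ne_zero.mpr (Nat.choose_pos hs).ne'
  have hentry : ∀ r ∈ range (M + 1), leibnizHarmonic K (s + r) (A - s + (M - r)) =
      1 / (A + M + 1) * ((A + M).choose (s + r) : K)⁻¹ := by
    intro r hr
    replace hr : r ≤ M := Nat.lt_succ_iff.mp (mem_range.mp hr)
    rw [tsub_add_tsub_comm hs hr, leibnizHarmonic_sub_eq_mul_inv_choose (add_le_add hs hr),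
      Nat.cast_add]
  calc _ = A.choose s * ∑ r ∈ range (M + 1),
        (M.choose r : K) * leibnizHarmonic K (s + r) (A - s + (M - r)) := by
        rw [mul_sum, mul_sum]
        refine sum_congr rfl fun r hr => ?_
        rw [hentry r hr]
        ring
    _ = A.choose s * (1 / (A + 1) * (A.choose s : K)⁻¹) := by
        rw [sum_range_choose_mul_leibnizHarmonic, leibnizHarmonic_sub_eq_mul_inv_choose hs]
    _ = 1 / (A + 1) := by rw [mul_left_comm, mul_inv_cancel₀ hchoose, mul_one]

/-- Hypergeometric averaging identity:
`(1/(A+M+1)) · Σ_{r=0}^{M} C(A,s)·C(M,r)/C(A+M,s+r) = 1/(A+1)` for `s ≤ A`. -/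
theorem hypergeometric_averaging_identity (A M s : ℕ) (hs : s ≤ A) :
    (1 / (A + M + 1 : ℝ)) *
        ∑ r ∈ Finset.range (M + 1),
          (A.choose s : ℝ) * (M.choose r : ℝ) * (((A + M).choose (s + r) : ℝ))⁻¹ =
      1 / (A + 1 : ℝ) :=
  hypergeometric_averaging_identity_general A M s hs
end

section
/- (No-entry lemma for the KNN utility) Let A be a finite set of labeled points and q a labeled point not in A, with d injective on A ∪ {q}. If at least K points of A are strictly closer to the query than q, i.e., |{p ∈ A : d(p) < d(q)}| ≥ K, then v_knn(A ∪ {q}) = v_knn(A). -/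
open Finset

variable {β L : Type*}

/-- The elements of `A` listed in increasing order of distance `d` to the query. -/
noncomputable def sortByDist (d : β → ℝ) (A : Finset β) : List β :=
  A.toList.mergeSort (fun p q => decide (d p ≤ d q))

/-- `N_i(A)`: the point of `A` with the `i`-th smallest distance to the query (1-indexed). -/
noncomputable def nthNearest [Inhabited β] (d : β → ℝ) (A : Finset β) (i : ℕ) : β :=
  (sortByDist d A).getD (i - 1) default

/-- The KNN utility of a finite set `A` of labeled points at a query with label `ytest`:
`v_knn(A) = (1/K) · Σ_{i=1}^{min(K,|A|)} 1[y(N_i(A)) = y_test]`. -/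
noncomputable def vknn [Inhabited β] [DecidableEq L] (K : ℕ) (ytest : L) (y : β → L)
    (d : β → ℝ) (A : Finset β) : ℝ :=
  (1 / K) * ∑ i ∈ Finset.Icc 1 (min K A.card),
    if y (nthNearest d A i) = ytest then (1 : ℝ) else 0

/-- The ADS value of a point `q` in the current group `C`, given the prefix instances `P`,
for the KNN utility. -/
noncomputable def adsKnn [Inhabited β] [DecidableEq β] [DecidableEq L] (K : ℕ) (ytest : L)
    (y : β → L) (d : β → ℝ) (P C : Finset β) (q : β) : ℝ :=
  (1 / C.card) *
    ∑ S ∈ (C.erase q).powerset,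
      (((C.card - 1).choose S.card : ℝ))⁻¹ *
        (vknn K ytest y d (P ∪ S ∪ {q}) - vknn K ytest y d (P ∪ S))

/-!
The points of `A` closer than a threshold `r` form an initial segment of the list of `A` sorted by
distance, so as soon as there are at least `K` of them they determine the utility. Points at
distance at least `r`, such as `q` for `r = d q`, can therefore be added without changing it.
-/

theorem filter_isPrefix_of_pairwise {α : Type*} {R : α → α → Prop} {p : α → Bool} {l : List α}
    (hl : l.Pairwise R) (hp : ∀ a b, R a b → p b → p a) : l.filter p <+: l := by
  induction hl with
  | nil => exact List.prefix_rfl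
  | @cons a l ha _ ih =>
    by_cases hpa : p a
    · rw [List.filter_cons_of_pos hpa]
      exact (List.prefix_cons_inj a).mpr ih
    · have hnone : (a :: l).filter p = [] := by
        rw [List.filter_cons_of_neg hpa, List.filter_eq_nil_iff]
        exact fun b hb hpb => hpa (hp a b (ha b hb) hpb)
      exact hnone ▸ List.nil_prefix

section SortByDist

variable (d : β → ℝ) (A : Finset β)

theorem sortByDist_perm : (sortByDist d A).Perm A.toList :=
  List.mergeSort_perm _ _

theorem nodup_sortByDist : (sortByDist d A).Nodup :=
  (sortByDist_perm d A).nodup_iff.mpr A.nodup_toList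

theorem length_sortByDist : (sortByDist d A).length = #A :=
  (sortByDist_perm d A).length_eq.trans A.length_toList

theorem pairwise_sortByDist : (sortByDist d A).Pairwise (fun p q => d p ≤ d q) := by
  simpa only [sortByDist, decide_eq_true_eq] using
    List.pairwise_mergeSort (le := fun p q => decide (d p ≤ d q))
      (fun _ _ _ => by simpa only [decide_eq_true_eq] using le_trans)
      (fun _ _ => by simpa only [Bool.or_eq_true, decide_eq_true_eq] using le_total _ _) A.toList

variable {d A}

theorem mem_sortByDist {p : β} : p ∈ sortByDist d A ↔ p ∈ A :=
  (sortByDist_perm d A).mem_iff.trans Finset.mem_toList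

theorem eq_sortByDist_of_perm {l : List β} (hinj : Set.InjOn d A) (hperm : l.Perm A.toList)
    (hsorted : l.Pairwise (fun p q => d p ≤ d q)) : l = sortByDist d A := by
  refine List.Perm.eq_of_pairwise (fun p q hp hq hpq hqp => ?_) hsorted (pairwise_sortByDist d A)
    (hperm.trans (sortByDist_perm d A).symm)
  exact hinj (Finset.mem_toList.mp (hperm.mem_iff.mp hp)) (mem_sortByDist.mp hq)
    (le_antisymm hpq hqp)

theorem filter_sortByDist {P : β → Prop} [DecidablePred P]
    (hinj : Set.InjOn d ↑(A.filter P)) :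
    (sortByDist d A).filter P = sortByDist d (A.filter P) := by
  refine eq_sortByDist_of_perm hinj ?_ ((pairwise_sortByDist d A).filter _)
  refine (List.perm_ext_iff_of_nodup ((nodup_sortByDist d A).filter _) (nodup_toList _)).mpr ?_
  intro p
  simp only [List.mem_filter, mem_sortByDist, decide_eq_true_eq, mem_toList, mem_filter]

theorem sortByDist_filter_lt_isPrefix {r : ℝ} (hinj : Set.InjOn d ↑({p ∈ A | d p < r})) :
    sortByDist d {p ∈ A | d p < r} <+: sortByDist d A := by
  rw [← filter_sortByDist hinj]
  refine filter_isPrefix_of_pairwise (pairwise_sortByDist d A) fun p q hpq hq => ?_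
  exact decide_eq_true (hpq.trans_lt (of_decide_eq_true hq))

theorem nthNearest_filter_lt [Inhabited β] {r : ℝ} {i : ℕ}
    (hinj : Set.InjOn d ↑({p ∈ A | d p < r})) (hi : i ∈ Icc 1 #{p ∈ A | d p < r}) :
    nthNearest d {p ∈ A | d p < r} i = nthNearest d A i := by
  obtain ⟨far, hfar⟩ := sortByDist_filter_lt_isPrefix hinj
  have hlen : i - 1 < (sortByDist d {p ∈ A | d p < r}).length := by
    rw [length_sortByDist]
    obtain ⟨hi_pos, hi_le⟩ := mem_Icc.mp hi
    omega
  rw [nthNearest, nthNearest, ← hfar, List.getD_append _ _ _ _ hlen]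

end SortByDist

theorem vknn_filter_lt [Inhabited β] [DecidableEq L] {K : ℕ} (ytest : L) (y : β → L)
    {d : β → ℝ} {A : Finset β} {r : ℝ} (hinj : Set.InjOn d ↑({p ∈ A | d p < r}))
    (hK : K ≤ #{p ∈ A | d p < r}) :
    vknn K ytest y d {p ∈ A | d p < r} = vknn K ytest y d A := by
  have hKA : K ≤ #A := hK.trans (card_filter_le _ _)
  rw [vknn, vknn, min_eq_left hK, min_eq_left hKA]
  congr 1
  refine sum_congr rfl fun i hi => ?_
  rw [nthNearest_filter_lt hinj (Icc_subset_Icc_right hK hi)]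

theorem vknn_no_entry_general [Inhabited β] [DecidableEq β] [DecidableEq L]
    {K : ℕ} (ytest : L) (y : β → L) {d : β → ℝ} {A T : Finset β} {r : ℝ}
    (hinj : Set.InjOn d ↑({p ∈ A | d p < r})) (hT : ∀ t ∈ T, r ≤ d t)
    (hclose : K ≤ #{p ∈ A | d p < r}) :
    vknn K ytest y d (A ∪ T) = vknn K ytest y d A := by
  have hfilter : {p ∈ A ∪ T | d p < r} = {p ∈ A | d p < r} := by
    rw [filter_union, filter_false_of_mem fun t ht => (hT t ht).not_gt, union_empty]
  calc vknn K ytest y d (A ∪ T)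
      = vknn K ytest y d {p ∈ A ∪ T | d p < r} :=
        (vknn_filter_lt ytest y (hfilter ▸ hinj) (hfilter ▸ hclose)).symm
    _ = vknn K ytest y d {p ∈ A | d p < r} := by rw [hfilter]
    _ = vknn K ytest y d A := vknn_filter_lt ytest y hinj hclose

/-- No-entry lemma for the KNN utility: if at least `K` points of `A` are strictly closer
to the query than `q ∉ A`, then adding `q` does not change the KNN utility. -/
theorem vknn_no_entry [Inhabited β] [DecidableEq β] [DecidableEq L]
    (K : ℕ) (hK : 1 ≤ K) (ytest : L) (y : β → L) (d : β → ℝ)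
    (A : Finset β) (q : β) (hq : q ∉ A)
    (hinj : Set.InjOn d ↑(insert q A))
    (hclose : K ≤ (A.filter (fun p => d p < d q)).card) :
    vknn K ytest y d (insert q A) = vknn K ytest y d A := by
  rw [insert_eq, union_comm]
  exact vknn_no_entry_general ytest y
    (hinj.mono (coe_subset.mpr ((filter_subset _ A).trans (subset_insert q A))))
    (fun _ ht => (congrArg d (mem_singleton.mp ht)).ge) hclose
end
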